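/- arXiv:2510.11265 — 2 statements merged into one kernel-verified Lean document; each statement's English description precedes it below -/
import Mathlib

section
/- Let T be a tree on n ≥ 2 vertices with diameter d and p pendant vertices, and let T₁ be the whiskered tree obtained from T by attaching one new pendant vertex to each vertex of T. Then the induced matching number of T₁ satisfies im(T₁) ≤ min{⌈(2n − d − 1)/2⌉, ⌊(2n + p − 2)/3⌋}. -/
open SimpleGraph

/-- An induced matching in `G`: a set of edges of `G` that are pairwise vertex-disjoint
and such that no edge of `G` joins endpoints of two distinct edges. -/
def SimpleGraph.IsInducedMatching {V : Type*} (G : SimpleGraph V) (M : Finset (Sym2 V)) : Prop :=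
  (∀ e ∈ M, e ∈ G.edgeSet) ∧
    ∀ e ∈ M, ∀ f ∈ M, e ≠ f → ∀ u ∈ e, ∀ v ∈ f, u ≠ v ∧ ¬ G.Adj u v

/-- The induced matching number of `G`: the maximum size of an induced matching. -/
noncomputable def SimpleGraph.inducedMatchingNum {V : Type*} (G : SimpleGraph V) : ℕ :=
  sSup {n | ∃ M : Finset (Sym2 V), G.IsInducedMatching M ∧ M.card = n}

/-- The number of pendant vertices (leaves, i.e. vertices of degree one) of `G`. -/
noncomputable def SimpleGraph.pendantCount {V : Type*} [Fintype V] (G : SimpleGraph V)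
    [DecidableRel G.Adj] : ℕ :=
  {v : V | G.degree v = 1}.ncard

/-- The whiskered graph `G₁`: attach one new pendant vertex to each vertex of `G`. -/
def SimpleGraph.whisker {V : Type*} (G : SimpleGraph V) : SimpleGraph (V ⊕ V) :=
  SimpleGraph.fromRel fun x y =>
    match x, y with
    | Sum.inl u, Sum.inl v => G.Adj u v
    | Sum.inl u, Sum.inr v => u = v
    | _, _ => False

/-- The multi-whiskered graph `G_a`: attach `a v` new pendant vertices to each vertex `v`
of `G`. -/
def SimpleGraph.multiWhisker {V : Type*} (G : SimpleGraph V) (a : V → ℕ) :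
    SimpleGraph (V ⊕ Σ v : V, Fin (a v)) :=
  SimpleGraph.fromRel fun x y =>
    match x, y with
    | Sum.inl u, Sum.inl v => G.Adj u v
    | Sum.inl u, Sum.inr w => u = w.1
    | _, _ => False

/-!
Choosing an original endpoint of every edge turns an induced matching of the whiskered graph into
an independent set `S` of the tree, so it suffices to bound `#S`. A path of length `d` needs at
least `d / 2` vertices to cover its edges, and the complement of `S` is a vertex cover, whence
`d ≤ 2 * (n - #S)`. On the other hand no edge meets `S` twice, so the degrees over `S` sum to at
most `n - 1`; all but at most `p` of them are at least two, whence `2 * #S ≤ n - 1 + p`. Adding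
`#S ≤ n - 1` gives the second bound.
-/

section InducedMatching

variable {V W : Type*} {G : SimpleGraph V} {H : SimpleGraph W}

theorem exists_isIndepSet_card_eq_of_isInducedMatching (f : G →g H)
    (hf : H.IsVertexCover (Set.range f)) {M : Finset (Sym2 W)} (hM : H.IsInducedMatching M) :
    ∃ S : Finset V, G.IsIndepSet S ∧ S.card = M.card := by
  classical
  have exists_mem (e : M) : ∃ v, f v ∈ e.1 := by
    obtain ⟨e, he⟩ := e
    induction e with
    | h x y =>
      rcases hf (hM.1 _ he) with ⟨v, rfl⟩ | ⟨v, rfl⟩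
      · exact ⟨v, Sym2.mem_mk_left _ _⟩
      · exact ⟨v, Sym2.mem_mk_right _ _⟩
  choose g hg using exists_mem
  have separated {a b : M} (hab : a ≠ b) : f (g a) ≠ f (g b) ∧ ¬ H.Adj (f (g a)) (f (g b)) :=
    hM.2 a a.2 b b.2 (Subtype.coe_ne_coe.mpr hab) _ (hg a) _ (hg b)
  have g_injective : Function.Injective g := fun a b hab ↦
    by_contra fun hne ↦ (separated hne).1 (congrArg f hab)
  refine ⟨Finset.univ.image g, ?_, ?_⟩
  · simp only [Finset.coe_image, Finset.coe_univ, Set.image_univ]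
    rintro _ ⟨a, rfl⟩ _ ⟨b, rfl⟩ hne hadj
    exact (separated (ne_of_apply_ne g hne)).2 (f.map_adj hadj)
  · rw [Finset.card_image_of_injective _ g_injective, Finset.card_univ, Fintype.card_coe]

theorem inducedMatchingNum_le_indepNum_of_hom [Finite V] (f : G →g H)
    (hf : H.IsVertexCover (Set.range f)) : H.inducedMatchingNum ≤ G.indepNum := by
  refine csSup_le' ?_
  rintro _ ⟨M, hM, rfl⟩
  obtain ⟨S, hS, hcard⟩ := exists_isIndepSet_card_eq_of_isInducedMatching f hf hM
  exact hcard ▸ hS.card_le_indepNum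

end InducedMatching

section Whisker

variable {V : Type*} (G : SimpleGraph V)

/-- The inclusion `x ↦ inl x` of a graph into its whiskered graph; its image covers every edge. -/
def whiskerInl : G →g G.whisker where
  toFun := Sum.inl
  map_rel' h := by simp [SimpleGraph.whisker, h, h.ne]

theorem isVertexCover_range_whiskerInl : G.whisker.IsVertexCover (Set.range (whiskerInl G)) := by
  rintro (u | u) (v | v) h
  · exact .inl ⟨u, rfl⟩
  · exact .inl ⟨u, rfl⟩
  · exact .inr ⟨v, rfl⟩
  · simp [SimpleGraph.whisker] at h

theorem inducedMatchingNum_whisker_le_indepNum [Finite V] :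
    G.whisker.inducedMatchingNum ≤ G.indepNum :=
  inducedMatchingNum_le_indepNum_of_hom (whiskerInl G) (isVertexCover_range_whiskerInl G)

end Whisker

section Diameter

variable {V : Type*} {G : SimpleGraph V}

-- Edges are peeled off in pairs, as consecutive edges may share a covering vertex: the first edge
-- of a pair is covered by a vertex that the remaining walk no longer counts.
theorem length_le_two_mul_countP_support {C : Set V} [DecidablePred (· ∈ C)]
    (hC : G.IsVertexCover C) {u v : V} :
    ∀ w : G.Walk u v, w.length ≤ 2 * w.support.countP (· ∈ C)
  | .nil => Nat.zero_le _
  | .cons h .nil => by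
    have := hC h
    grind [Walk.support_cons, Walk.support_nil, Walk.length_cons, Walk.length_nil]
  | .cons h (.cons _ w) => by
    have ih := length_le_two_mul_countP_support hC w
    have := hC h
    grind [Walk.support_cons, Walk.length_cons]

theorem length_le_two_mul_card_of_isPath {C : Finset V} (hC : G.IsVertexCover C) {u v : V}
    {w : G.Walk u v} (hw : w.IsPath) : w.length ≤ 2 * C.card := by
  classical
  calc
    w.length ≤ 2 * w.support.countP (· ∈ C) := length_le_two_mul_countP_support hC w
    _ = 2 * (w.support.filter (· ∈ C)).toFinset.card := by
      rw [List.countP_eq_length_filter, List.toFinset_card_of_nodup (hw.support_nodup.filter _)]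
    _ ≤ 2 * C.card := by
      gcongr
      intro x hx
      simpa using (List.mem_filter.mp (List.mem_toFinset.mp hx)).2

theorem diam_le_two_mul_card_of_isVertexCover (hG : G.Connected) {C : Finset V}
    (hC : G.IsVertexCover C) : G.diam ≤ 2 * C.card := by
  have := hG.nonempty
  obtain ⟨u, v, huv⟩ := G.exists_dist_eq_diam
  obtain ⟨w, hw, hlength⟩ := hG.exists_path_of_dist u v
  exact huv ▸ hlength ▸ length_le_two_mul_card_of_isPath hC hw

theorem two_mul_card_add_diam_le_of_isIndepSet [Fintype V] (hG : G.Connected) {S : Finset V}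
    (hS : G.IsIndepSet S) : 2 * S.card + G.diam ≤ 2 * Fintype.card V := by
  classical
  have hC : G.IsVertexCover ↑Sᶜ := by simpa using hS
  have hdiam := diam_le_two_mul_card_of_isVertexCover hG hC
  have hcard := S.card_add_card_compl
  lia

end Diameter

section Pendant

variable {V : Type*} {G : SimpleGraph V} {S : Finset V}

theorem sum_degree_le_card_edgeFinset_of_isIndepSet [G.LocallyFinite] [Fintype G.edgeSet]
    (hS : G.IsIndepSet S) : ∑ v ∈ S, G.degree v ≤ G.edgeFinset.card := by
  classical
  have hdisjoint : (S : Set V).PairwiseDisjoint fun v ↦ G.incidenceFinset v := by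
    intro u hu v hv huv
    refine Finset.disjoint_left.mpr fun e heu hev ↦ hS hu hv huv ?_
    rw [mem_incidenceFinset] at heu hev
    exact G.adj_of_mem_incidenceSet huv heu hev
  calc
    ∑ v ∈ S, G.degree v = (S.biUnion fun v ↦ G.incidenceFinset v).card := by
      simp_rw [Finset.card_biUnion hdisjoint, card_incidenceFinset_eq_degree]
    _ ≤ G.edgeFinset.card :=
      Finset.card_le_card <| Finset.biUnion_subset.mpr fun v _ ↦ G.incidenceFinset_subset v

variable [Fintype V]

theorem card_lt_card_univ_of_isIndepSet (hG : G ≠ ⊥) (hS : G.IsIndepSet S) :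
    S.card < Fintype.card V := by
  obtain ⟨u, v, huv⟩ := ne_bot_iff_exists_adj.mp hG
  refine (Finset.card_lt_iff_ne_univ S).mpr ?_
  rintro rfl
  exact hS (by simp) (by simp) huv.ne huv

variable [DecidableRel G.Adj]

theorem two_mul_card_le_sum_degree_add_pendantCount (hdeg : ∀ v ∈ S, 0 < G.degree v) :
    2 * S.card ≤ ∑ v ∈ S, G.degree v + G.pendantCount := by
  calc
    2 * S.card = ∑ v ∈ S, 2 := by rw [Finset.sum_const, smul_eq_mul, mul_comm]
    _ ≤ ∑ v ∈ S, (G.degree v + if G.degree v = 1 then 1 else 0) :=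
      Finset.sum_le_sum fun v hv ↦ by have := hdeg v hv; grind
    _ = ∑ v ∈ S, G.degree v + (S.filter fun v ↦ G.degree v = 1).card := by
      rw [Finset.sum_add_distrib, Finset.card_filter]
    _ ≤ ∑ v ∈ S, G.degree v + G.pendantCount := by
      gcongr
      rw [pendantCount, ← Set.ncard_coe_finset]
      exact Set.ncard_le_ncard fun v hv ↦ (Finset.mem_filter.mp hv).2

theorem three_mul_card_add_two_le_of_isTree [Nontrivial V] (hG : G.IsTree) (hS : G.IsIndepSet S) :
    3 * S.card + 2 ≤ 2 * Fintype.card V + G.pendantCount := by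
  have hne_bot : G ≠ ⊥ := by
    rintro rfl
    exact not_connected_bot hG.connected
  have hpendant := two_mul_card_le_sum_degree_add_pendantCount (S := S) fun v _ ↦
    hG.connected.preconnected.degree_pos_of_nontrivial v
  have hsum := sum_degree_le_card_edgeFinset_of_isIndepSet hS
  have hedges := hG.card_edgeFinset
  have hcard := card_lt_card_univ_of_isIndepSet hne_bot hS
  lia

end Pendant

/-- Upper bound for the induced matching number of the whiskered tree `T₁`:
`im(T₁) ≤ min{⌈(2n − d − 1)/2⌉, ⌊(2n + p − 2)/3⌋}`. -/
theorem whiskered_tree_im_upper_bound {V : Type*} [Fintype V] (G : SimpleGraph V)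
    [DecidableRel G.Adj] (hT : G.IsTree)
    (n d p : ℕ) (hn : n = Fintype.card V) (hn2 : 2 ≤ n)
    (hd : d = G.diam) (hp : p = G.pendantCount) :
    (G.whisker.inducedMatchingNum : ℤ) ≤
      min ⌈((2 * (n : ℚ) - d - 1) / 2 : ℚ)⌉ ⌊((2 * (n : ℚ) + p - 2) / 3 : ℚ)⌋ := by
  subst hn hd hp
  have : Nontrivial V := Fintype.one_lt_card_iff_nontrivial.mp hn2
  have him : G.whisker.inducedMatchingNum ≤ G.indepNum := inducedMatchingNum_whisker_le_indepNum G
  obtain ⟨S, hS, hcard⟩ := G.exists_isNIndepSet_indepNum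
  have hdiam := two_mul_card_add_diam_le_of_isIndepSet hT.connected hS
  have hpendant := three_mul_card_add_two_le_of_isTree hT hS
  rw [hcard] at hdiam hpendant
  refine (Nat.cast_le.mpr him).trans (le_min ?_ ?_)
  · have hdiam' : 2 * (G.indepNum : ℚ) + G.diam ≤ 2 * Fintype.card V := mod_cast hdiam
    rw [Int.le_ceil_iff]
    push_cast
    linarith
  · have hpendant' : 3 * (G.indepNum : ℚ) + 2 ≤ 2 * Fintype.card V + G.pendantCount :=
      mod_cast hpendant
    rw [Int.le_floor]
    push_cast
    linarith
end

section
/- Let G be a finite simple graph and let G_a be the multi-whiskered graph obtained by attaching a_i ≥ 1 new pendant vertices to the i-th vertex of G, for an arbitrary vector a of positive integers. Then the induced matching number of G_a equals the independence number of G: im(G_a) = α(G). -/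
/-!
The vertices of `G` cover every edge of `G_a`, so picking from each edge of an induced matching of
`G_a` an endpoint in `G` gives as many distinct, pairwise non-adjacent vertices of `G`. Conversely,
choosing one whisker at each vertex of an independent set of `G` gives an induced matching of `G_a`,
because a whisker has no neighbour besides its base.
-/

open SimpleGraph

/-- The independence number of `G`: the maximum size of a set of pairwise
non-adjacent vertices. -/
noncomputable def SimpleGraph.indepNumber {V : Type*} (G : SimpleGraph V) : ℕ :=
  sSup {n | ∃ s : Finset V, (∀ u ∈ s, ∀ v ∈ s, ¬ G.Adj u v) ∧ s.card = n}

section Whiskers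

variable {V W : Type*} {G : SimpleGraph V} {H : SimpleGraph W}

theorem isIndepSet_iff_forall_not_adj {s : Set V} :
    G.IsIndepSet s ↔ ∀ u ∈ s, ∀ v ∈ s, ¬G.Adj u v :=
  ⟨fun hs _ hu _ hv huv ↦ hs hu hv huv.ne huv, fun hs u hu v hv _ ↦ hs u hu v hv⟩

theorem indepNumber_eq_indepNum (G : SimpleGraph V) : G.indepNumber = G.indepNum := by
  simp only [indepNumber, indepNum, isNIndepSet_iff, isIndepSet_iff_forall_not_adj, Finset.mem_coe]

theorem exists_isIndepSet_card_eq_of_isVertexCover_range (φ : G →g H)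
    (hφ : H.IsVertexCover (Set.range φ)) {M : Finset (Sym2 W)} (hM : H.IsInducedMatching M) :
    ∃ s : Finset V, G.IsIndepSet s ∧ s.card = M.card := by
  have exists_mem (e : M) : ∃ v, φ v ∈ e.1 := by
    obtain ⟨⟨x, y⟩, he⟩ := e
    obtain ⟨v, rfl⟩ | ⟨v, rfl⟩ := hφ (hM.1 _ he)
    exacts [⟨v, Sym2.mem_mk_left _ _⟩, ⟨v, Sym2.mem_mk_right _ _⟩]
  choose f hf using exists_mem
  have apart {e e' : M} (hne : e ≠ e') : φ (f e) ≠ φ (f e') ∧ ¬H.Adj (φ (f e)) (φ (f e')) :=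
    hM.2 e e.2 e' e'.2 (Subtype.coe_ne_coe.2 hne) _ (hf e) _ (hf e')
  have f_injective : Function.Injective f := fun e e' h ↦
    by_contra fun hne ↦ (apart hne).1 (congrArg φ h)
  refine ⟨Finset.univ.map ⟨f, f_injective⟩, ?_, by simp⟩
  simp only [Finset.coe_map, Finset.coe_univ, Set.image_univ]
  rintro _ ⟨e, rfl⟩ _ ⟨e', rfl⟩ hne hadj
  exact (apart (ne_of_apply_ne f hne)).2 (φ.map_adj hadj)

/-- `w` is a pendant vertex (whisker) of `G` attached to `v`. Degree one is encoded by naming the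
unique neighbour, so that the definition needs no finiteness. -/
def IsPendantAt (G : SimpleGraph V) (w v : V) : Prop :=
  ∀ x, G.Adj w x ↔ x = v

theorem IsPendantAt.adj {w v : V} (h : IsPendantAt G w v) : G.Adj w v :=
  (h v).2 rfl

theorem IsPendantAt.ne_of_not_adj {u v w : V} (hw : IsPendantAt G w u) (hadj : ¬G.Adj u v) :
    w ≠ v := by
  rintro rfl
  exact hadj hw.adj.symm

theorem IsPendantAt.ne_and_not_adj {u v w z x y : V} (hw : IsPendantAt G w u)
    (hz : IsPendantAt G z v) (huv : u ≠ v) (hadj : ¬G.Adj u v)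
    (hx : x ∈ s(u, w)) (hy : y ∈ s(v, z)) : x ≠ y ∧ ¬G.Adj x y := by
  have hwv : w ≠ v := hw.ne_of_not_adj hadj
  have hzu : z ≠ u := hz.ne_of_not_adj (mt Adj.symm hadj)
  rcases Sym2.mem_iff.1 hx with rfl | rfl <;> rcases Sym2.mem_iff.1 hy with rfl | rfl
  · exact ⟨huv, hadj⟩
  · exact ⟨hzu.symm, fun h ↦ huv ((hz _).1 h.symm)⟩
  · exact ⟨hwv, fun h ↦ huv ((hw _).1 h).symm⟩
  · refine ⟨?_, fun h ↦ hzu ((hw _).1 h)⟩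
    rintro rfl
    exact huv ((hz _).1 hw.adj)

theorem exists_isInducedMatching_card_eq_of_isPendantAt (φ : G ↪g H) {p : V → W} {s : Finset V}
    (hp : ∀ v ∈ s, IsPendantAt H (p v) (φ v)) (hs : G.IsIndepSet s) :
    ∃ M : Finset (Sym2 W), H.IsInducedMatching M ∧ M.card = s.card := by
  classical
  have apart {u v : V} (hu : u ∈ s) (hv : v ∈ s) (huv : u ≠ v) {x y : W}
      (hx : x ∈ s(φ u, p u)) (hy : y ∈ s(φ v, p v)) : x ≠ y ∧ ¬H.Adj x y :=
    (hp u hu).ne_and_not_adj (hp v hv) (φ.injective.ne huv)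
      (mt φ.map_adj_iff.1 (hs hu hv huv)) hx hy
  refine ⟨s.image fun v ↦ s(φ v, p v), ⟨?_, ?_⟩, Finset.card_image_of_injOn ?_⟩
  · simp only [Finset.forall_mem_image, mem_edgeSet]
    exact fun v hv ↦ (hp v hv).adj.symm
  · simp only [Finset.forall_mem_image]
    exact fun u hu v hv hne x hx y hy ↦
      apart hu hv (ne_of_apply_ne (fun v ↦ s(φ v, p v)) hne) hx hy
  · intro u hu v hv h
    by_contra huv
    have hmem : φ u ∈ s(φ v, p v) := h.subst (motive := (φ u ∈ ·)) (Sym2.mem_mk_left _ _)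
    exact (apart hu hv huv (Sym2.mem_mk_left _ _) hmem).1 rfl

theorem exists_isInducedMatching_card_eq_iff_exists_isNIndepSet (φ : G ↪g H)
    (hφ : H.IsVertexCover (Set.range φ)) {p : V → W} (hp : ∀ v, IsPendantAt H (p v) (φ v)) (n : ℕ) :
    (∃ M : Finset (Sym2 W), H.IsInducedMatching M ∧ M.card = n) ↔ ∃ s, G.IsNIndepSet n s := by
  simp only [isNIndepSet_iff]
  constructor
  · rintro ⟨M, hM, rfl⟩
    exact exists_isIndepSet_card_eq_of_isVertexCover_range φ.toHom hφ hM
  · rintro ⟨s, hs, rfl⟩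
    exact exists_isInducedMatching_card_eq_of_isPendantAt φ (fun v _ ↦ hp v) hs

/-- The inclusion of `G` as an induced subgraph of the multi-whiskered graph `G_a`. -/
def multiWhiskerEmbedding (G : SimpleGraph V) (a : V → ℕ) : G ↪g G.multiWhisker a where
  toFun := Sum.inl
  inj' := Sum.inl_injective
  map_rel_iff' {u v} := by
    simpa [multiWhisker, G.adj_comm v u] using G.ne_of_adj

theorem isVertexCover_range_multiWhiskerEmbedding (G : SimpleGraph V) (a : V → ℕ) :
    (G.multiWhisker a).IsVertexCover (Set.range (multiWhiskerEmbedding G a)) := by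
  rintro (u | w) (v | z) h
  · exact .inl ⟨u, rfl⟩
  · exact .inl ⟨u, rfl⟩
  · exact .inr ⟨v, rfl⟩
  · simp [multiWhisker] at h

theorem isPendantAt_multiWhisker_inr (G : SimpleGraph V) (a : V → ℕ) (w : Σ v, Fin (a v)) :
    IsPendantAt (G.multiWhisker a) (.inr w) (.inl w.1) := by
  rintro (u | z) <;> simp [multiWhisker]

-- Comparing sizes one by one, not maxima, avoids the junk value `sSup = 0` that `indepNumber` and
-- `inducedMatchingNum` take on infinite graphs whose independent sets have unbounded size.
theorem multiWhisker_im_eq_indepNumber_general (G : SimpleGraph V) (a : V → ℕ)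
    (ha : ∀ v, 1 ≤ a v) (n : ℕ) :
    (∃ M, (G.multiWhisker a).IsInducedMatching M ∧ M.card = n) ↔ ∃ s, G.IsNIndepSet n s :=
  exists_isInducedMatching_card_eq_iff_exists_isNIndepSet (multiWhiskerEmbedding G a)
    (isVertexCover_range_multiWhiskerEmbedding G a)
    (fun v ↦ isPendantAt_multiWhisker_inr G a ⟨v, 0, ha v⟩) n

end Whiskers

/-- The induced matching number of a multi-whiskered graph equals the independence
number of the underlying graph: `im(G_a) = α(G)`. -/
theorem multiWhisker_im_eq_indepNumber {V : Type*} [Fintype V] (G : SimpleGraph V)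
    (a : V → ℕ) (ha : ∀ v, 1 ≤ a v) :
    (G.multiWhisker a).inducedMatchingNum = G.indepNumber := by
  simp only [inducedMatchingNum, indepNumber_eq_indepNum, indepNum,
    multiWhisker_im_eq_indepNumber_general G a ha]
end
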